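/- Let p ≥ 5 be a prime and q a prime number. Let a and b be integers with (1/(2p))·q^{p/(p−2)} < a, b < (1/(2p) + 1/(2^p·p^p))·q^{p/(p−2)} (inequalities of real numbers). Suppose that f_q(a,b) is squarefree and that ((2p² − 1)/(2p)^p)·q^{p(p−1)/(p−2)} > p. Then g(a,b) − (a−b)q^p does not divide g(a,b) + (a−b)q^p. -/

import Mathlib

open scoped BigOperators

/-- `g(a,b) = Σ_{i=0}^{p−1} a^{p−1−i} b^{i}`. -/
def gPoly (p : ℕ) (a b : ℤ) : ℤ := ∑ i ∈ Finset.range p, a ^ (p - 1 - i) * b ^ i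

/-- `f_q(a,b) = 2(a^p + b^p)q^p − (a−b)²q^{2p} − g(a,b)²`. -/
def fPoly (p : ℕ) (q a b : ℤ) : ℤ :=
  2 * (a ^ p + b ^ p) * q ^ p - (a - b) ^ 2 * q ^ (2 * p) - (gPoly p a b) ^ 2

/-!
Put `x = q ^ (p / (p - 2))`, so that `x ^ (p - 2) = q ^ p`. The interval containing `a` and `b`
has length `x / (2p) ^ p`, hence `|a - b| q ^ p < x ^ (p - 1) / (2p) ^ p`, while `g(a,b)` has `p`
terms larger than `(x / (2p)) ^ (p - 1)` and so exceeds `2p²` times that bound. Thus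
`g - (a - b) q ^ p` is too large to divide `2 (a - b) q ^ p` unless `a = b`. In that case `a²`
divides `f_q(a,b)`, so `a = 1`; but then `x ^ (p - 2)` would lie strictly between
`(2p) ^ (p - 2) - 1` and `(2p) ^ (p - 2)`, whereas it is the integer `q ^ p`.
-/

section Polynomials

lemma gPoly_self (p : ℕ) (a : ℤ) : gPoly p a a = p * a ^ (p - 1) := by
  simpa only [gPoly, mul_comm] using geom_sum₂_self a p

variable {p : ℕ} {q a b : ℤ}

lemma mul_pow_le_gPoly {m : ℝ} (hm : 0 ≤ m) (ha : m ≤ a) (hb : m ≤ b) :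
    p * m ^ (p - 1) ≤ (gPoly p a b : ℝ) := by
  have hb₀ : (0 : ℝ) ≤ b := hm.trans hb
  calc p * m ^ (p - 1) = ∑ i ∈ Finset.range p, m ^ i * m ^ (p - 1 - i) :=
        (geom_sum₂_self m p).symm
    _ ≤ ∑ i ∈ Finset.range p, (b : ℝ) ^ i * (a : ℝ) ^ (p - 1 - i) := by gcongr
    _ = gPoly p a b := by simp only [gPoly, mul_comm, Int.cast_sum, Int.cast_mul, Int.cast_pow]

lemma sq_dvd_fPoly_self (hp : 2 ≤ p) : a ^ 2 ∣ fPoly p q a a := by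
  have hdvd : a ^ 2 ∣ a ^ p := pow_dvd_pow a hp
  have hdvd' : a ^ 2 ∣ (a ^ (p - 1)) ^ 2 := pow_dvd_pow_of_dvd (dvd_pow_self a (by omega)) 2
  rw [fPoly, gPoly_self, sub_self, zero_pow two_ne_zero, zero_mul, sub_zero, mul_pow]
  exact dvd_sub (((hdvd.add hdvd).mul_left 2).mul_right _) (hdvd'.mul_left _)

lemma isUnit_of_squarefree_fPoly_self (hp : 2 ≤ p) (hf : Squarefree (fPoly p q a a)) :
    IsUnit a :=
  hf a (by simpa only [sq] using sq_dvd_fPoly_self hp)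

end Polynomials

lemma eq_zero_of_sub_dvd_add {g d : ℤ} (hdvd : g - d ∣ g + d) (hlt : 3 * |d| < g) : d = 0 := by
  have hdvd₂ : g - d ∣ 2 * d := by
    simpa only [add_sub_sub_cancel, ← two_mul] using hdvd.sub (dvd_refl (g - d))
  have habs : |2 * d| < g - d := by
    rw [abs_mul, abs_two]
    linarith [le_abs_self d]
  linarith [Int.eq_zero_of_abs_lt_dvd hdvd₂ habs]

lemma rpow_div_sub_two_pow {p : ℕ} (hp : 3 ≤ p) {y : ℝ} (hy : 0 ≤ y) :
    (y ^ ((p : ℝ) / (p - 2))) ^ (p - 2) = y ^ p := by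
  have hp' : (p : ℝ) - 2 ≠ 0 := by
    have : (3 : ℝ) ≤ p := by exact_mod_cast hp
    linarith
  rw [← Real.rpow_mul_natCast hy, Nat.cast_sub (by omega), Nat.cast_ofNat, div_mul_cancel₀ _ hp',
    Real.rpow_natCast]

/-- By Bernoulli's inequality, `x ^ k` exceeds `N ^ k - 1`. -/
lemma pow_ne_intCast_of_near {N k : ℕ} (hk : k ≠ 0) (hkN : k ≤ N) {x : ℝ} (hxN : x < N)
    (hNx : N < (1 + 1 / (N : ℝ) ^ (k + 1)) * x) (z : ℤ) : x ^ k ≠ z := by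
  have hN : (1 : ℝ) ≤ N := by exact_mod_cast (Nat.one_le_iff_ne_zero.2 hk).trans hkN
  set ε : ℝ := 1 / (N : ℝ) ^ (k + 1) with hε
  have hε₀ : 0 < ε := by positivity
  have hε₁ : ε ≤ 1 := div_le_one_of_le₀ (one_le_pow₀ hN) (by positivity)
  have hx : 0 < x :=
    pos_of_mul_pos_right ((zero_lt_one.trans_le hN).trans hNx) (by positivity)
  have hεx : ε * x < ε * N := mul_lt_mul_of_pos_left hxN hε₀
  have hnear : N * (1 - ε) < x := by linarith
  have hlower : (N : ℝ) ^ k - 1 < x ^ k := by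
    have hkN' : (k : ℝ) / N ≤ 1 := div_le_one_of_le₀ (by exact_mod_cast hkN) (by positivity)
    calc (N : ℝ) ^ k - 1 ≤ N ^ k - k / N := by linarith
      _ = N ^ k * (1 + k * -ε) := by rw [hε]; field_simp; ring
      _ ≤ N ^ k * (1 + -ε) ^ k := by gcongr; exact one_add_mul_le_pow (by linarith) k
      _ = (N * (1 - ε)) ^ k := by rw [mul_pow, sub_eq_add_neg]
      _ < x ^ k := pow_lt_pow_left₀ hnear (mul_nonneg (by positivity) (by linarith)) hk
  have hupper : x ^ k < (N : ℝ) ^ k := pow_lt_pow_left₀ hxN hx.le hk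
  intro hz
  rw [hz] at hlower hupper
  have hlower' : (N : ℤ) ^ k - 1 < z := by exact_mod_cast hlower
  have hupper' : z < (N : ℤ) ^ k := by exact_mod_cast hupper
  omega

/-- The open interval from `x / (2p)` to `x / (2p) + x / (2p) ^ p`, in which the theorem places
`a` and `b` for `x = q ^ (p / (p - 2))`. -/
def window (p : ℕ) (x : ℝ) : Set ℝ :=
  Set.Ioo (1 / (2 * (p : ℝ)) * x) ((1 / (2 * (p : ℝ)) + 1 / (2 ^ p * (p : ℝ) ^ p)) * x)

namespace window

variable {p : ℕ} {x y z : ℝ}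

lemma parameter_pos (hy : y ∈ window p x) : 0 < x := by
  have hlen : 0 < 1 / (2 ^ p * (p : ℝ) ^ p) * x := by linarith [hy.1.trans hy.2]
  exact pos_of_mul_pos_right hlen (by positivity)

lemma pos_of_mem (hy : y ∈ window p x) : 0 < y :=
  (mul_nonneg (by positivity) (parameter_pos hy).le).trans_lt hy.1

lemma abs_sub_lt (hy : y ∈ window p x) (hz : z ∈ window p x) :
    |y - z| < x / (2 * p) ^ p := by
  have hlen : x / (2 * p) ^ p = 1 / (2 ^ p * (p : ℝ) ^ p) * x := by rw [mul_pow]; ring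
  rw [hlen, abs_lt]
  constructor <;> linarith [hy.1, hy.2, hz.1, hz.2]

lemma abs_sub_mul_pow_lt (hp : 2 ≤ p) (hy : y ∈ window p x) (hz : z ∈ window p x) :
    |(y - z) * x ^ (p - 2)| < x ^ (p - 1) / (2 * p) ^ p := by
  have hpow : 0 < x ^ (p - 2) := pow_pos (parameter_pos hy) _
  calc |(y - z) * x ^ (p - 2)| = |y - z| * x ^ (p - 2) := by rw [abs_mul, abs_of_pos hpow]
    _ < x / (2 * p) ^ p * x ^ (p - 2) := by gcongr; exact abs_sub_lt hy hz
    _ = x ^ (p - 1) / (2 * p) ^ p := by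
      rw [div_mul_eq_mul_div, ← pow_succ', show p - 2 + 1 = p - 1 by omega]

lemma le_gPoly (hp : p ≠ 0) {a b : ℤ} (ha : (a : ℝ) ∈ window p x) (hb : (b : ℝ) ∈ window p x) :
    2 * p ^ 2 * (x ^ (p - 1) / (2 * p) ^ p) ≤ (gPoly p a b : ℝ) := by
  have hx : 0 < x := parameter_pos ha
  refine le_trans (le_of_eq ?_) (mul_pow_le_gPoly (by positivity) ha.1.le hb.1.le)
  obtain ⟨n, rfl⟩ := Nat.exists_eq_succ_of_ne_zero hp
  rw [Nat.succ_sub_one, one_div_mul_eq_div, div_pow, pow_succ (2 * _) n]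
  field_simp

lemma eq_of_sub_dvd_add (hp : 2 ≤ p) {q a b : ℤ} (hx : x ^ (p - 2) = q ^ p)
    (ha : (a : ℝ) ∈ window p x) (hb : (b : ℝ) ∈ window p x)
    (hdvd : gPoly p a b - (a - b) * q ^ p ∣ gPoly p a b + (a - b) * q ^ p) : a = b := by
  have hx₀ : 0 < x := parameter_pos ha
  have hp' : (2 : ℝ) ≤ p := by exact_mod_cast hp
  have hsize : 3 * |((a : ℝ) - b) * q ^ p| < gPoly p a b := by
    rw [← hx]
    calc 3 * |((a : ℝ) - b) * x ^ (p - 2)| < 3 * (x ^ (p - 1) / (2 * p) ^ p) := by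
          gcongr; exact abs_sub_mul_pow_lt hp ha hb
      _ ≤ 2 * p ^ 2 * (x ^ (p - 1) / (2 * p) ^ p) := by gcongr; nlinarith
      _ ≤ gPoly p a b := le_gPoly (by omega) ha hb
  have hzero : (a - b) * q ^ p = 0 := eq_zero_of_sub_dvd_add hdvd (by exact_mod_cast hsize)
  have hq : q ^ p ≠ 0 := by
    have : (q : ℝ) ^ p ≠ 0 := hx ▸ (pow_pos hx₀ _).ne'
    exact_mod_cast this
  exact sub_eq_zero.1 ((mul_eq_zero_iff_right hq).1 hzero)

lemma one_notMem (hp : 3 ≤ p) {n : ℤ} (hx : x ^ (p - 2) = n) : 1 ∉ window p x := by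
  rintro ⟨hlower, hupper⟩
  have hp₀ : (0 : ℝ) < 2 * p := by positivity
  refine pow_ne_intCast_of_near (N := 2 * p) (k := p - 2) (by omega) (by omega) ?_ ?_ n hx
  · rw [one_div_mul_eq_div, div_lt_one hp₀] at hlower
    exact_mod_cast hlower
  · rw [show p - 2 + 1 = p - 1 by omega]
    push_cast
    calc 2 * (p : ℝ) < 2 * p * ((1 / (2 * p) + 1 / (2 ^ p * (p : ℝ) ^ p)) * x) :=
          lt_mul_of_one_lt_right hp₀ hupper
      _ = (1 + 1 / (2 * (p : ℝ)) ^ (p - 1)) * x := by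
        rw [← mul_pow, ← mul_pow_sub_one (by omega : p ≠ 0) (2 * (p : ℝ))]
        field_simp

end window

theorem stmt_10_general (p q : ℕ) (hp : 3 ≤ p) (a b : ℤ)
    (ha : (a : ℝ) ∈ window p ((q : ℝ) ^ ((p : ℝ) / ((p : ℝ) - 2))))
    (hb : (b : ℝ) ∈ window p ((q : ℝ) ^ ((p : ℝ) / ((p : ℝ) - 2))))
    (hsf : Squarefree (fPoly p (q : ℤ) a b)) :
    ¬ (gPoly p a b - (a - b) * (q : ℤ) ^ p ∣ gPoly p a b + (a - b) * (q : ℤ) ^ p) := by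
  intro hdvd
  have hpow : ((q : ℝ) ^ ((p : ℝ) / ((p : ℝ) - 2))) ^ (p - 2) = ((q : ℤ) : ℝ) ^ p :=
    rpow_div_sub_two_pow hp q.cast_nonneg
  obtain rfl : a = b := window.eq_of_sub_dvd_add (by omega) hpow ha hb hdvd
  have hunit : IsUnit a := isUnit_of_squarefree_fPoly_self (by omega) hsf
  have hpos : 0 < a := by exact_mod_cast window.pos_of_mem ha
  obtain rfl : a = 1 := by
    rcases Int.isUnit_iff.1 hunit with h_one | h_neg <;> omega
  exact window.one_notMem hp (n := (q : ℤ) ^ p) (by exact_mod_cast hpow) (by exact_mod_cast ha)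

theorem stmt_10 (p q : ℕ) (hp : p.Prime) (hp5 : 5 ≤ p) (hq : q.Prime) (a b : ℤ)
    (ha1 : (1 / (2 * (p : ℝ))) * (q : ℝ) ^ ((p : ℝ) / ((p : ℝ) - 2)) < (a : ℝ))
    (ha2 : (a : ℝ) < (1 / (2 * (p : ℝ)) + 1 / (2 ^ p * (p : ℝ) ^ p)) *
      (q : ℝ) ^ ((p : ℝ) / ((p : ℝ) - 2)))
    (hb1 : (1 / (2 * (p : ℝ))) * (q : ℝ) ^ ((p : ℝ) / ((p : ℝ) - 2)) < (b : ℝ))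
    (hb2 : (b : ℝ) < (1 / (2 * (p : ℝ)) + 1 / (2 ^ p * (p : ℝ) ^ p)) *
      (q : ℝ) ^ ((p : ℝ) / ((p : ℝ) - 2)))
    (hsf : Squarefree (fPoly p (q : ℤ) a b))
    (hbig : (p : ℝ) < ((2 * (p : ℝ) ^ 2 - 1) / (2 * (p : ℝ)) ^ p) *
      (q : ℝ) ^ (((p : ℝ) * ((p : ℝ) - 1)) / ((p : ℝ) - 2))) :
    ¬ (gPoly p a b - (a - b) * (q : ℤ) ^ p ∣ gPoly p a b + (a - b) * (q : ℤ) ^ p) :=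
  stmt_10_general p q (by omega) a b ⟨ha1, ha2⟩ ⟨hb1, hb2⟩ hsf
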